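/- Let a, b ∈ 𝔽_q^* with a ≠ wb for every w ∈ 𝔽_p^*, write α = Tr(a²), β = Tr(b²), γ = Tr(ab), and let Ω = #{d ∈ 𝔽_q : Tr(d²) = 0, Tr(ad) = 0 and Tr(bd) = 0}. If m is odd, then (as complex numbers): Ω = p^{m−3} + η̄(−α)·p^{−2}(p−1)GḠ if α ≠ 0 and β = γ = 0; Ω = p^{m−3} if (α ≠ 0, β ≠ 0 and αβ ≠ γ²) or α = β = 0; Ω = p^{m−3} if γ ≠ 0 and exactly one of α, β is nonzero; and Ω = p^{m−3} + η̄(−β)·p^{−2}(p−1)GḠ if (α ≠ 0, β ≠ 0 and αβ = γ²) or (β ≠ 0 and α = γ = 0). -/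

import Mathlib

open Finset
open scoped Classical

noncomputable section

/-- `ζ_p = exp(2πi/p)`. -/
def zeta (p : ℕ) : ℂ := Complex.exp (2 * Real.pi * Complex.I / p)

/-- The canonical additive character of `ℤ/p`: `χ̄₁(c) = ζ_p^c`. -/
def chiBar (p : ℕ) (c : ZMod p) : ℂ := zeta p ^ c.val

/-- The quadratic character of `(ℤ/p)^*`, extended by `η̄(0) = 0`. -/
def etaBar (p : ℕ) (c : ZMod p) : ℂ :=
  if c = 0 then 0 else if IsSquare c then 1 else -1

/-- The quadratic character of `F^*`, extended by `η(0) = 0`. -/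
def etaQ (F : Type) [Field F] (x : F) : ℂ :=
  if x = 0 then 0 else if IsSquare x then 1 else -1

/-- The absolute trace map from `F` to `ℤ/p`. -/
def Trq (p : ℕ) (F : Type) [Field F] [Algebra (ZMod p) F] (x : F) : ZMod p :=
  Algebra.trace (ZMod p) F x

/-- The canonical additive character of `F`: `χ₁(x) = ζ_p^{Tr x}`. -/
def chiQ (p : ℕ) (F : Type) [Field F] [Algebra (ZMod p) F] (x : F) : ℂ :=
  chiBar p (Trq p F x)

/-- The quadratic Gauss sum `G` over `F`. -/
def GaussQ (p : ℕ) (F : Type) [Field F] [Fintype F] [Algebra (ZMod p) F] : ℂ :=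
  ∑ x ∈ univ.filter (fun x : F => x ≠ 0), etaQ F x * chiQ p F x

/-- The quadratic Gauss sum `Ḡ` over `ℤ/p`. -/
def GaussP (p : ℕ) [NeZero p] : ℂ :=
  ∑ y ∈ univ.filter (fun y : ZMod p => y ≠ 0), etaBar p y * chiBar p y

/-! Detect the three trace conditions with additive characters: `p³ Ω` is the sum over `x, y, z`
in `𝔽_p` and `d` in `𝔽_q` of `χ₁(x d² + (y a + z b) d)`. The terms with `x = 0` contribute `q`,
because `a` and `b` are independent over `𝔽_p`. For `x ≠ 0`, completing the square in `d` evaluates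
the inner sum as `η(x) G χ̄₁(-Tr((y a + z b)²) / 4x)`; as `m` is odd, `η` restricts to `η̄` on
`𝔽_p`, and summing over `x` produces `Ḡ`. What remains is the sum over `y, z` of
`η̄(-(α y² + 2γ y z + β z²))`, which is zero unless the form has rank one. -/

section QuadraticCharSums

variable {K : Type*} [Field K] [Fintype K] [DecidableEq K]

theorem sum_comp_sq {R : Type*} [CommRing R] (hK : ringChar K ≠ 2) (f : K → R) :
    ∑ u, f (u ^ 2) = ∑ t, (quadraticChar K t + 1) * f t := by
  rw [← Fintype.sum_fiberwise' (fun u : K => u ^ 2) f]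
  refine sum_congr rfl fun t _ => ?_
  have hcard := congrArg (Int.cast : ℤ → R) (quadraticChar_card_sqrts hK t)
  rw [Set.toFinset_card] at hcard
  push_cast at hcard
  rw [sum_const, nsmul_eq_mul, ← hcard]
  rfl

theorem sum_quadraticChar_sq :
    ∑ u : K, quadraticChar K (u ^ 2) = Fintype.card K - 1 := by
  have hterm (u : K) : quadraticChar K (u ^ 2) = 1 - if u = 0 then 1 else 0 := by
    by_cases hu : u = 0
    · simp [hu]
    · rw [quadraticChar_sq_one' hu, if_neg hu, sub_zero]
  simp [hterm]

/- `∑ u, (η(u² + c) + 1)` counts the points of the conic `v² = u² + c`, which `s = v - u` turns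
into the graph `u = (c - s²) / 2s` over `s ≠ 0`. -/
theorem sum_quadraticChar_sq_add (hK : ringChar K ≠ 2) {c : K} (hc : c ≠ 0) :
    ∑ u : K, quadraticChar K (u ^ 2 + c) = -1 := by
  have h2 : (2 : K) ≠ 0 := Ring.two_ne_zero hK
  have hsqrts (t : K) :
      quadraticChar K t + 1 = ∑ v : K, if v ^ 2 = t then (1 : ℤ) else 0 := by
    simpa using (sum_comp_sq hK fun r => if r = t then (1 : ℤ) else 0).symm
  have hshift (u : K) : (∑ v : K, if v ^ 2 = u ^ 2 + c then (1 : ℤ) else 0) =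
      ∑ s : K, if s ^ 2 + 2 * u * s = c then (1 : ℤ) else 0 := by
    rw [← Equiv.sum_comp (Equiv.addRight u)]
    refine sum_congr rfl fun s _ => if_congr ?_ rfl rfl
    rw [Equiv.coe_addRight, ← sub_eq_zero, ← sub_eq_zero (b := c)]
    ring_nf
  have hfiber (s : K) : (∑ u : K, if s ^ 2 + 2 * u * s = c then (1 : ℤ) else 0) =
      1 - if s = 0 then 1 else 0 := by
    by_cases hs : s = 0
    · simp [hs, hc.symm]
    · have hsolve (u : K) : s ^ 2 + 2 * u * s = c ↔ u = (c - s ^ 2) / (2 * s) := by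
        rw [eq_div_iff (mul_ne_zero h2 hs), eq_sub_iff_add_eq]
        ring_nf
      simp [hsolve, hs]
  have hcount : ∑ u : K, (quadraticChar K (u ^ 2 + c) + 1) = Fintype.card K - 1 := by
    simp only [hsqrts, hshift]
    rw [sum_comm]
    simp [hfiber]
  rw [sum_add_distrib] at hcount
  simpa [sub_eq_add_neg, add_comm] using hcount

/-- The character sum `∑ η(α y² + 2γ y z + β z²)` over all `(y, z)` of the binary quadratic form
with Gram matrix `(α γ; γ β)`. -/
def binaryFormCharSum (α β γ : K) : ℤ :=
  ∑ y : K, ∑ z : K, quadraticChar K (α * y ^ 2 + 2 * γ * y * z + β * z ^ 2)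

theorem binaryFormCharSum_comm (α β γ : K) :
    binaryFormCharSum α β γ = binaryFormCharSum β α γ := by
  rw [binaryFormCharSum, sum_comm]
  refine sum_congr rfl fun y _ => sum_congr rfl fun z _ => congrArg _ ?_
  ring

/- Completing the square: `β Q(y, z) = (β z + γ y)² + (α β - γ²) y²`. -/
theorem quadraticChar_mul_binaryFormCharSum {β : K} (hβ : β ≠ 0) (α γ : K) :
    quadraticChar K β * binaryFormCharSum α β γ =
      ∑ y : K, ∑ z : K, quadraticChar K (z ^ 2 + (α * β - γ ^ 2) * y ^ 2) := by
  simp only [binaryFormCharSum, mul_sum]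
  refine sum_congr rfl fun y _ => ?_
  refine Fintype.sum_equiv ((Equiv.mulLeft₀ β hβ).trans (Equiv.addRight (γ * y))) _ _ fun z => ?_
  rw [← map_mul, Equiv.trans_apply, Equiv.mulLeft₀_apply, Equiv.coe_addRight]
  refine congrArg _ ?_
  ring

theorem binaryFormCharSum_of_mul_eq_sq {α β γ : K} (hβ : β ≠ 0) (h : α * β = γ ^ 2) :
    binaryFormCharSum α β γ =
      Fintype.card K * (Fintype.card K - 1) * quadraticChar K β := by
  have hsum := quadraticChar_mul_binaryFormCharSum hβ α γ
  simp only [h, sub_self, zero_mul, add_zero, sum_quadraticChar_sq, sum_const, card_univ,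
    nsmul_eq_mul] at hsum
  linear_combination quadraticChar K β * hsum -
    binaryFormCharSum α β γ * quadraticChar_sq_one hβ

theorem binaryFormCharSum_zero_zero (hK : ringChar K ≠ 2) (γ : K) :
    binaryFormCharSum 0 0 γ = 0 := by
  simp only [binaryFormCharSum, zero_mul, zero_add, add_zero, map_mul, ← mul_sum,
    quadraticChar_sum_zero hK, mul_zero, sum_const_zero]

theorem binaryFormCharSum_of_mul_ne_sq_of_ne_zero (hK : ringChar K ≠ 2) {α β γ : K}
    (hβ : β ≠ 0) (h : α * β ≠ γ ^ 2) : binaryFormCharSum α β γ = 0 := by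
  have hinner (y : K) : ∑ z : K, quadraticChar K (z ^ 2 + (α * β - γ ^ 2) * y ^ 2) =
      (if y = 0 then (Fintype.card K : ℤ) else 0) - 1 := by
    by_cases hy : y = 0
    · simp only [hy, ne_eq, OfNat.ofNat_ne_zero, not_false_eq_true, zero_pow, mul_zero, add_zero,
        sum_quadraticChar_sq, if_true]
    · rw [if_neg hy, zero_sub,
        sum_quadraticChar_sq_add hK (mul_ne_zero (sub_ne_zero.2 h) (pow_ne_zero 2 hy))]
  have hsum : quadraticChar K β * binaryFormCharSum α β γ = 0 := by
    simp only [quadraticChar_mul_binaryFormCharSum hβ, hinner]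
    simp
  exact (mul_eq_zero.1 hsum).resolve_left (mt quadraticChar_eq_zero_iff.1 hβ)

theorem binaryFormCharSum_of_mul_ne_sq (hK : ringChar K ≠ 2) {α β γ : K}
    (h : α * β ≠ γ ^ 2) : binaryFormCharSum α β γ = 0 := by
  by_cases hβ : β = 0
  · by_cases hα : α = 0
    · rw [hα, hβ, binaryFormCharSum_zero_zero hK]
    · rw [binaryFormCharSum_comm]
      exact binaryFormCharSum_of_mul_ne_sq_of_ne_zero hK hα (by rwa [mul_comm])
  · exact binaryFormCharSum_of_mul_ne_sq_of_ne_zero hK hβ h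

end QuadraticCharSums

section GaussSums

variable {K R : Type*} [Field K] [Fintype K] [DecidableEq K] [CommRing R]

/-- The Gauss sum `∑ x, η(x) ψ(x)` of the quadratic character `η` of a finite field, with the
values of `η` taken in the codomain of `ψ`. -/
def quadraticGaussSum (ψ : AddChar K R) : R :=
  gaussSum ((quadraticChar K).ringHomComp (Int.castRingHom R)) ψ

theorem sum_quadraticChar_mul_addChar_mul (hK : ringChar K ≠ 2) (ψ : AddChar K R) (c : K) :
    ∑ x, (quadraticChar K x : R) * ψ (c * x) = quadraticChar K c * quadraticGaussSum ψ := by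
  by_cases hc : c = 0
  · have hsum := congrArg (Int.cast : ℤ → R) (quadraticChar_sum_zero hK)
    simpa [hc, quadraticChar_zero, -quadraticChar_apply] using hsum
  · have hsq : (quadraticChar K c : R) ^ 2 = 1 := by
      rw [← Int.cast_pow, quadraticChar_sq_one hc, Int.cast_one]
    have hshift := gaussSum_mulShift
      ((quadraticChar K).ringHomComp (Int.castRingHom R)) ψ (Units.mk0 c hc)
    simp only [gaussSum, MulChar.ringHomComp_apply, eq_intCast, Units.val_mk0,
      AddChar.mulShift_apply] at hshift
    simp only [quadraticGaussSum, gaussSum, MulChar.ringHomComp_apply, eq_intCast]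
    rw [← hshift, ← mul_assoc, ← sq, hsq, one_mul]

/- The substitution `x ↦ (4x)⁻¹` preserves `η`; at `x = 0` it is the junk value `0⁻¹ = 0`, where
`η` vanishes. -/
theorem sum_quadraticChar_mul_addChar_inv_four_mul (hK : ringChar K ≠ 2) (ψ : AddChar K R)
    (c : K) :
    ∑ x, (quadraticChar K x : R) * ψ ((4 * x)⁻¹ * c) =
      quadraticChar K c * quadraticGaussSum ψ := by
  have h2 : (2 : K) ≠ 0 := Ring.two_ne_zero hK
  have h4 : (4 : K) = 2 ^ 2 := by norm_num
  have hinv (x : K) : quadraticChar K (4 * x)⁻¹ = quadraticChar K x := by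
    by_cases hx : x = 0
    · simp only [hx, mul_zero, inv_zero]
    · have hx4 : 4 * x = (2 * x) ^ 2 * x⁻¹ := by
        field_simp
        norm_num
      rw [hx4, mul_inv, inv_inv, ← inv_pow, map_mul,
        quadraticChar_sq_one' (inv_ne_zero (mul_ne_zero h2 hx)), one_mul]
  rw [← sum_quadraticChar_mul_addChar_mul hK]
  refine Fintype.sum_equiv ((Equiv.mulLeft₀ 4 (h4 ▸ pow_ne_zero 2 h2)).trans (Equiv.inv K)) _ _
    fun x => ?_
  simp only [Equiv.trans_apply, Equiv.mulLeft₀_apply, Equiv.inv_apply, hinv, mul_comm c]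

variable [IsDomain R]

theorem sum_addChar_mul_sq (hK : ringChar K ≠ 2) {ψ : AddChar K R} (hψ : ψ.IsPrimitive)
    {c : K} (hc : c ≠ 0) :
    ∑ u, ψ (c * u ^ 2) = quadraticChar K c * quadraticGaussSum ψ := by
  have hzero : ∑ t, ψ (c * t) = 0 := by
    simpa only [hc, if_false, mul_comm, Nat.cast_zero] using AddChar.sum_mulShift c hψ
  rw [sum_comp_sq hK fun t => ψ (c * t)]
  simp only [add_mul, one_mul, sum_add_distrib, hzero, add_zero,
    sum_quadraticChar_mul_addChar_mul hK]

theorem sum_addChar_mul_sq_add_mul (hK : ringChar K ≠ 2) {ψ : AddChar K R}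
    (hψ : ψ.IsPrimitive) {c : K} (hc : c ≠ 0) (e : K) :
    ∑ u, ψ (c * u ^ 2 + e * u) =
      quadraticChar K c * quadraticGaussSum ψ * ψ ((4 * c)⁻¹ * -e ^ 2) := by
  have h2 : (2 : K) ≠ 0 := Ring.two_ne_zero hK
  rw [← sum_addChar_mul_sq hK hψ hc, sum_mul]
  refine Fintype.sum_equiv (Equiv.addRight (e / (2 * c))) _ _ fun u => ?_
  rw [← AddChar.map_add_eq_mul, Equiv.coe_addRight]
  refine congrArg ψ ?_
  have h4 : (4 : K) ≠ 0 := by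
    rw [show (4 : K) = 2 * 2 by norm_num]
    exact mul_ne_zero h2 h2
  field_simp
  ring

end GaussSums

section OddDegree

theorem isSquare_algebraMap_iff_of_odd_finrank {K L : Type*} [Field K] [CommRing L] [Algebra K L]
    (hodd : Odd (Module.finrank K L)) {x : K} : IsSquare (algebraMap K L x) ↔ IsSquare x := by
  refine ⟨fun ⟨s, hs⟩ => ?_, fun hx => hx.map (algebraMap K L)⟩
  by_cases hx : x = 0
  · exact hx ▸ IsSquare.zero
  obtain ⟨k, hk⟩ := hodd
  have hnorm : x ^ (2 * k + 1) = Algebra.norm K s * Algebra.norm K s := by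
    rw [← hk, ← Algebra.norm_algebraMap, hs, map_mul]
  refine ⟨Algebra.norm K s / x ^ k, ?_⟩
  field_simp
  linear_combination hnorm

theorem quadraticChar_algebraMap_of_odd_finrank {K L : Type*} [Field K] [Fintype K]
    [DecidableEq K] [Field L] [Fintype L] [DecidableEq L] [Algebra K L]
    (hodd : Odd (Module.finrank K L)) (x : K) :
    quadraticChar L (algebraMap K L x) = quadraticChar K x := by
  simp only [quadraticChar_apply, quadraticCharFun, FaithfulSMul.algebraMap_eq_zero_iff,
    isSquare_algebraMap_iff_of_odd_finrank hodd]

end OddDegree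

section TraceCharacter

/-- The additive character `ψ ∘ Tr` of an extension `L / K`, lifted from the additive character
`ψ` of the base `K`. -/
def traceAddChar {K R : Type*} (L : Type*) [CommRing K] [CommRing L] [Algebra K L] [CommRing R]
    (ψ : AddChar K R) : AddChar L R :=
  ψ.compAddMonoidHom (Algebra.trace K L).toAddMonoidHom

theorem traceAddChar_apply {K L R : Type*} [CommRing K] [CommRing L] [Algebra K L] [CommRing R]
    (ψ : AddChar K R) (x : L) : traceAddChar L ψ x = ψ (Algebra.trace K L x) :=
  rfl

theorem isPrimitive_traceAddChar {K L R : Type*} [Field K] [Field L] [Algebra K L]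
    [FiniteDimensional K L] [Algebra.IsSeparable K L] [CommRing R] {ψ : AddChar K R}
    (hψ : ψ.IsPrimitive) : (traceAddChar L ψ).IsPrimitive := by
  have hψ1 : ψ ≠ 1 := by simpa only [AddChar.mulShift_one] using hψ one_ne_zero
  obtain ⟨c, hc⟩ := AddChar.ne_one_iff.1 hψ1
  obtain ⟨x, rfl⟩ := Algebra.trace_surjective K L c
  exact AddChar.IsPrimitive.of_ne_one (AddChar.ne_one_iff.2 ⟨x, hc⟩)

theorem sum_addChar_linearMap {K V R : Type*} [CommRing K] [AddCommGroup V] [Module K V]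
    [Fintype V] [CommRing R] [IsDomain R] {ψ : AddChar K R} (hψ : ψ.IsPrimitive) (f : V →ₗ[K] K)
    [Decidable (∀ v, f v = 0)] :
    ∑ v, ψ (f v) = if ∀ v, f v = 0 then (Fintype.card V : R) else 0 := by
  have htriv : ψ.compAddMonoidHom f.toAddMonoidHom = 0 ↔ ∀ v, f v = 0 := by
    refine ⟨fun h => ?_, fun h => AddChar.eq_zero_iff.2 fun v => by simp [h]⟩
    by_contra! ⟨v, hv⟩
    refine hψ hv (AddChar.eq_one_iff.2 fun c => ?_)
    simpa [mul_comm] using AddChar.eq_zero_iff.1 h (c • v)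
  have hsum := AddChar.sum_eq_ite (ψ.compAddMonoidHom f.toAddMonoidHom)
  simp only [htriv] at hsum
  exact hsum

theorem card_mul_card_filter_eq_sum {K L R V : Type*} [CommRing K] [Fintype K] [DecidableEq K]
    [CommRing L] [Fintype L] [Algebra K L] [CommRing R] [IsDomain R] [AddCommGroup V] [Module K V]
    [Fintype V] {ψ : AddChar K R} (hψ : ψ.IsPrimitive) (φ : V →ₗ[K] L) :
    (Fintype.card K * Fintype.card V : R) *
        #{d : L | Algebra.trace K L (d ^ 2) = 0 ∧ ∀ v, Algebra.trace K L (φ v * d) = 0} =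
      ∑ x : K, ∑ v : V, ∑ d : L, traceAddChar L ψ (algebraMap K L x * d ^ 2 + φ v * d) := by
  have hd (d : L) : ∑ x : K, ∑ v : V, traceAddChar L ψ (algebraMap K L x * d ^ 2 + φ v * d) =
      if Algebra.trace K L (d ^ 2) = 0 ∧ ∀ v, Algebra.trace K L (φ v * d) = 0
        then (Fintype.card K * Fintype.card V : R) else 0 := by
    have hV : ∑ v, ψ (Algebra.trace K L (φ v * d)) =
        if ∀ v, Algebra.trace K L (φ v * d) = 0 then (Fintype.card V : R) else 0 :=
      sum_addChar_linearMap hψ (Algebra.trace K L ∘ₗ LinearMap.mulRight K d ∘ₗ φ)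
    have hK := AddChar.sum_mulShift (Algebra.trace K L (d ^ 2)) hψ
    simp only [AddChar.map_add_eq_mul, traceAddChar_apply, ← Algebra.smul_def, map_smul,
      smul_eq_mul, ← mul_sum, hV]
    rw [← sum_mul, hK, ite_and, Nat.cast_ite, Nat.cast_zero, ite_mul, zero_mul, mul_ite, mul_zero]
  rw [card_filter, Nat.cast_sum, mul_sum, sum_congr rfl fun x _ => sum_comm, sum_comm]
  refine sum_congr rfl fun d _ => ?_
  rw [hd, Nat.cast_ite, Nat.cast_one, Nat.cast_zero, mul_ite, mul_one, mul_zero]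

theorem sum_sum_addChar_mul_of_injective {L R V : Type*} [CommRing L] [Fintype L] [CommRing R]
    [IsDomain R] [AddCommGroup V] [Fintype V] {Ψ : AddChar L R} (hΨ : Ψ.IsPrimitive)
    {φ : V →+ L} (hφ : Function.Injective φ) :
    ∑ v : V, ∑ d : L, Ψ (φ v * d) = Fintype.card L := by
  have hd (v : V) : ∑ d : L, Ψ (φ v * d) = if v = 0 then (Fintype.card L : R) else 0 := by
    simpa only [mul_comm, map_eq_zero_iff φ hφ, Nat.cast_ite, Nat.cast_zero] using
      AddChar.sum_mulShift (φ v) hΨ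
  simp [hd]

variable {K L R V : Type*} [Field K] [Fintype K] [Field L] [Fintype L] [Algebra K L]
  [CommRing R] [IsDomain R] [AddCommGroup V] [Module K V] [Fintype V]

theorem sum_traceAddChar_mul_sq_add_mul [DecidableEq K] [DecidableEq L] (hK : ringChar K ≠ 2)
    (hodd : Odd (Module.finrank K L)) {ψ : AddChar K R} (hψ : ψ.IsPrimitive) {x : K} (hx : x ≠ 0)
    (e : L) :
    ∑ d : L, traceAddChar L ψ (algebraMap K L x * d ^ 2 + e * d) =
      quadraticGaussSum (traceAddChar L ψ) *
        (quadraticChar K x * ψ ((4 * x)⁻¹ * -Algebra.trace K L (e ^ 2))) := by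
  have hL : ringChar L ≠ 2 := Algebra.ringChar_eq K L ▸ hK
  have harg : (4 * algebraMap K L x)⁻¹ * -e ^ 2 = algebraMap K L (4 * x)⁻¹ * -e ^ 2 := by
    rw [map_inv₀, map_mul, map_ofNat]
  rw [sum_addChar_mul_sq_add_mul hL (isPrimitive_traceAddChar hψ) (by simpa using hx), harg,
    quadraticChar_algebraMap_of_odd_finrank hodd, traceAddChar_apply, ← Algebra.smul_def,
    map_smul, smul_eq_mul, map_neg]
  ring

theorem card_mul_card_filter_eq_card_add [DecidableEq K] [DecidableEq L] (hK : ringChar K ≠ 2)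
    (hodd : Odd (Module.finrank K L)) {ψ : AddChar K R} (hψ : ψ.IsPrimitive) {φ : V →ₗ[K] L}
    (hφ : Function.Injective φ) :
    (Fintype.card K * Fintype.card V : R) *
        #{d : L | Algebra.trace K L (d ^ 2) = 0 ∧ ∀ v, Algebra.trace K L (φ v * d) = 0} =
      Fintype.card L + quadraticGaussSum (traceAddChar L ψ) * quadraticGaussSum ψ *
        ∑ v : V, (quadraticChar K (-Algebra.trace K L (φ v ^ 2)) : R) := by
  have hx (x : K) :
      ∑ v : V, ∑ d : L, traceAddChar L ψ (algebraMap K L x * d ^ 2 + φ v * d) =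
        (if x = 0 then (Fintype.card L : R) else 0) +
          ∑ v : V, quadraticGaussSum (traceAddChar L ψ) *
            (quadraticChar K x * ψ ((4 * x)⁻¹ * -Algebra.trace K L (φ v ^ 2))) := by
    by_cases hx : x = 0
    · simpa [hx] using sum_sum_addChar_mul_of_injective (isPrimitive_traceAddChar hψ)
        (φ := φ.toAddMonoidHom) hφ
    · simp only [hx, if_false, zero_add, sum_traceAddChar_mul_sq_add_mul hK hodd hψ hx]
  simp only [card_mul_card_filter_eq_sum hψ, hx, sum_add_distrib, sum_ite_eq', mem_univ, if_true]
  rw [sum_comm]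
  simp only [← mul_sum, sum_quadraticChar_mul_addChar_inv_four_mul hK, ← sum_mul]
  ring

end TraceCharacter

section TwoTraceConditions

theorem trace_sq_smul_add_smul {K L : Type*} [CommRing K] [CommRing L] [Algebra K L]
    (a b : L) (y z : K) :
    Algebra.trace K L ((y • a + z • b) ^ 2) =
      Algebra.trace K L (a ^ 2) * y ^ 2 + 2 * Algebra.trace K L (a * b) * y * z +
        Algebra.trace K L (b ^ 2) * z ^ 2 := by
  have hexpand : (y • a + z • b) ^ 2 =
      (y ^ 2) • a ^ 2 + (2 * y * z) • (a * b) + (z ^ 2) • b ^ 2 := by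
    simp only [Algebra.smul_def, map_mul, map_pow, map_ofNat]
    ring
  simp only [hexpand, map_add, map_smul, smul_eq_mul]
  ring

theorem forall_trace_smul_add_smul_mul_eq_zero_iff {K L : Type*} [CommRing K]
    [CommRing L] [Algebra K L] (a b d : L) :
    (∀ v : K × K, Algebra.trace K L ((v.1 • a + v.2 • b) * d) = 0) ↔
      Algebra.trace K L (a * d) = 0 ∧ Algebra.trace K L (b * d) = 0 := by
  simp only [add_mul, smul_mul_assoc, map_add, map_smul, smul_eq_mul]
  refine ⟨fun h => ⟨by simpa using h (1, 0), by simpa using h (0, 1)⟩, fun h v => ?_⟩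
  rw [h.1, h.2, mul_zero, mul_zero, add_zero]

theorem sum_quadraticChar_neg_trace_sq {K L : Type*} [Field K] [Fintype K] [DecidableEq K]
    [CommRing L] [Algebra K L] (a b : L) :
    ∑ v : K × K, quadraticChar K (-Algebra.trace K L ((v.1 • a + v.2 • b) ^ 2)) =
      binaryFormCharSum (-Algebra.trace K L (a ^ 2)) (-Algebra.trace K L (b ^ 2))
        (-Algebra.trace K L (a * b)) := by
  rw [binaryFormCharSum, Fintype.sum_prod_type]
  refine sum_congr rfl fun y _ => sum_congr rfl fun z _ => congrArg _ ?_
  rw [trace_sq_smul_add_smul]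
  ring

/-- The set counted by `Ω`: the vectors `d` isotropic for the trace form `Tr(x y)` of `L / K` and
orthogonal to both `a` and `b`. -/
def isotropicOrthogonal (K : Type*) {L : Type*} [CommRing K] [DecidableEq K] [CommRing L]
    [Fintype L] [Algebra K L] (a b : L) : Finset L :=
  {d | Algebra.trace K L (d ^ 2) = 0 ∧ Algebra.trace K L (a * d) = 0 ∧
    Algebra.trace K L (b * d) = 0}

theorem isotropicOrthogonal_comm {K L : Type*} [CommRing K] [DecidableEq K] [CommRing L]
    [Fintype L] [Algebra K L] (a b : L) :
    isotropicOrthogonal K a b = isotropicOrthogonal K b a := by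
  simp only [isotropicOrthogonal, and_comm]

variable {K L R : Type*} [Field K] [Fintype K] [DecidableEq K] [Field L] [Fintype L]
  [Algebra K L] [Field R] [CharZero R] {ψ : AddChar K R} {a b : L}

theorem card_isotropicOrthogonal [DecidableEq L] (hK : ringChar K ≠ 2)
    (hodd : Odd (Module.finrank K L)) (hψ : ψ.IsPrimitive) (hab : LinearIndependent K ![a, b]) :
    (#(isotropicOrthogonal K a b) : R) =
      (Fintype.card K : R) ^ ((Module.finrank K L : ℤ) - 3) +
        (Fintype.card K : R) ^ (-3 : ℤ) *
          (quadraticGaussSum (traceAddChar L ψ) * quadraticGaussSum ψ) *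
          binaryFormCharSum (-Algebra.trace K L (a ^ 2)) (-Algebra.trace K L (b ^ 2))
            (-Algebra.trace K L (a * b)) := by
  have hinj : Function.Injective
      ((LinearMap.toSpanSingleton K L a).coprod (LinearMap.toSpanSingleton K L b)) := by
    refine (injective_iff_map_eq_zero _).2 fun v hv => Prod.ext_iff.2 ?_
    exact LinearIndependent.pair_iff.1 hab v.1 v.2 (by simpa using hv)
  have hcount := card_mul_card_filter_eq_card_add hK hodd hψ hinj
  simp only [LinearMap.coprod_apply, LinearMap.toSpanSingleton_apply,
    forall_trace_smul_add_smul_mul_eq_zero_iff, ← Int.cast_sum, sum_quadraticChar_neg_trace_sq,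
    Fintype.card_prod, Nat.cast_mul, Module.card_eq_pow_finrank (K := K) (V := L),
    Nat.cast_pow] at hcount
  have hq : (Fintype.card K : R) ≠ 0 := Nat.cast_ne_zero.2 Fintype.card_ne_zero
  rw [isotropicOrthogonal, eq_div_of_mul_eq (mul_ne_zero hq (mul_ne_zero hq hq))
    ((mul_comm _ _).trans hcount), zpow_sub₀ hq, zpow_natCast, zpow_neg, zpow_ofNat]
  ring

/- The count does not involve a character, so a primitive one in an extension of `R` suffices. -/
theorem card_isotropicOrthogonal_of_binaryFormCharSum_eq_zero (hK : ringChar K ≠ 2)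
    (hodd : Odd (Module.finrank K L)) (hab : LinearIndependent K ![a, b])
    (h : binaryFormCharSum (-Algebra.trace K L (a ^ 2)) (-Algebra.trace K L (b ^ 2))
      (-Algebra.trace K L (a * b)) = 0) :
    (#(isotropicOrthogonal K a b) : R) =
      (Fintype.card K : R) ^ ((Module.finrank K L : ℤ) - 3) := by
  have hchar : ringChar R ≠ ringChar K := by
    rw [ringChar.eq_zero]
    exact (CharP.ringChar_ne_zero_of_finite K).symm
  let Ψ := AddChar.FiniteField.primitiveChar K R hchar
  have : CharZero (CyclotomicField Ψ.n R) :=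
    charZero_of_injective_algebraMap (algebraMap R _).injective
  apply (algebraMap R (CyclotomicField Ψ.n R)).injective
  simpa [h] using card_isotropicOrthogonal hK hodd Ψ.prim hab

theorem card_isotropicOrthogonal_of_mul_eq_sq [DecidableEq L] (hK : ringChar K ≠ 2)
    (hodd : Odd (Module.finrank K L)) (hψ : ψ.IsPrimitive) (hab : LinearIndependent K ![a, b])
    (hb : Algebra.trace K L (b ^ 2) ≠ 0)
    (h : Algebra.trace K L (a ^ 2) * Algebra.trace K L (b ^ 2) = Algebra.trace K L (a * b) ^ 2) :
    (#(isotropicOrthogonal K a b) : R) =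
      (Fintype.card K : R) ^ ((Module.finrank K L : ℤ) - 3) +
        quadraticChar K (-Algebra.trace K L (b ^ 2)) * (Fintype.card K : R) ^ (-2 : ℤ) *
          ((Fintype.card K : R) - 1) *
          (quadraticGaussSum (traceAddChar L ψ) * quadraticGaussSum ψ) := by
  have hq : (Fintype.card K : R) ≠ 0 := Nat.cast_ne_zero.2 Fintype.card_ne_zero
  have hpow : (Fintype.card K : R) ^ (-2 : ℤ) =
      (Fintype.card K : R) ^ (-3 : ℤ) * Fintype.card K := by
    rw [← zpow_add_one₀ hq]
    norm_num
  rw [card_isotropicOrthogonal hK hodd hψ hab,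
    binaryFormCharSum_of_mul_eq_sq (neg_ne_zero.2 hb) (by rw [neg_mul_neg, h, neg_sq]), hpow]
  push_cast
  ring

theorem Omega_card_m_odd_general [DecidableEq L] (hK : ringChar K ≠ 2)
    (hodd : Odd (Module.finrank K L)) (hψ : ψ.IsPrimitive) (hab : LinearIndependent K ![a, b])
    {α β γ : K} (hα : α = Algebra.trace K L (a ^ 2)) (hβ : β = Algebra.trace K L (b ^ 2))
    (hγ : γ = Algebra.trace K L (a * b)) :
    let q : R := Fintype.card K
    let n : ℤ := Module.finrank K L
    let GG := quadraticGaussSum (traceAddChar L ψ) * quadraticGaussSum ψ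
    (α ≠ 0 ∧ β = 0 ∧ γ = 0 → (#(isotropicOrthogonal K a b) : R) =
      q ^ (n - 3) + quadraticChar K (-α) * q ^ (-2 : ℤ) * (q - 1) * GG) ∧
    ((α ≠ 0 ∧ β ≠ 0 ∧ α * β ≠ γ ^ 2) ∨ (α = 0 ∧ β = 0) →
      (#(isotropicOrthogonal K a b) : R) = q ^ (n - 3)) ∧
    (γ ≠ 0 ∧ ((α ≠ 0 ∧ β = 0) ∨ (α = 0 ∧ β ≠ 0)) →
      (#(isotropicOrthogonal K a b) : R) = q ^ (n - 3)) ∧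
    ((α ≠ 0 ∧ β ≠ 0 ∧ α * β = γ ^ 2) ∨ (β ≠ 0 ∧ α = 0 ∧ γ = 0) →
      (#(isotropicOrthogonal K a b) : R) =
        q ^ (n - 3) + quadraticChar K (-β) * q ^ (-2 : ℤ) * (q - 1) * GG) := by
  subst hα hβ hγ
  have hnondegenerate
      (h : Algebra.trace K L (a ^ 2) * Algebra.trace K L (b ^ 2) ≠ Algebra.trace K L (a * b) ^ 2) :=
    card_isotropicOrthogonal_of_binaryFormCharSum_eq_zero (R := R) hK hodd hab
      (binaryFormCharSum_of_mul_ne_sq hK (by rwa [neg_mul_neg, neg_sq]))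
  refine ⟨?_, ?_, ?_, ?_⟩
  · rintro ⟨hα, hβ, hγ⟩
    rw [isotropicOrthogonal_comm]
    refine card_isotropicOrthogonal_of_mul_eq_sq hK hodd hψ
      (LinearIndependent.pair_symm_iff.1 hab) hα ?_
    rw [hβ, mul_comm b, hγ, zero_mul, zero_pow two_ne_zero]
  · rintro (⟨-, -, h⟩ | ⟨hα, hβ⟩)
    · exact hnondegenerate h
    · refine card_isotropicOrthogonal_of_binaryFormCharSum_eq_zero hK hodd hab ?_
      rw [hα, hβ, neg_zero, binaryFormCharSum_zero_zero hK]
  · rintro ⟨hγ, h⟩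
    refine hnondegenerate ?_
    rw [mul_eq_zero.2 (h.symm.imp And.left And.right)]
    exact (pow_ne_zero 2 hγ).symm
  · rintro (⟨-, hβ, h⟩ | ⟨hβ, hα, hγ⟩)
    · exact card_isotropicOrthogonal_of_mul_eq_sq hK hodd hψ hab hβ h
    · refine card_isotropicOrthogonal_of_mul_eq_sq hK hodd hψ hab hβ ?_
      rw [hα, hγ, zero_mul, zero_pow two_ne_zero]

end TwoTraceConditions

section PrimeField

/-- The additive character `χ̄₁` of `ℤ/p`, bundled. -/
def chiBarAddChar (p : ℕ) [NeZero p] : AddChar (ZMod p) ℂ :=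
  AddChar.zmodChar p (Complex.isPrimitiveRoot_exp p (NeZero.ne p)).pow_eq_one

theorem chiBarAddChar_apply (p : ℕ) [NeZero p] (c : ZMod p) : chiBarAddChar p c = chiBar p c :=
  rfl

theorem isPrimitive_chiBarAddChar (p : ℕ) [NeZero p] : (chiBarAddChar p).IsPrimitive :=
  AddChar.zmodChar_primitive_of_primitive_root p (Complex.isPrimitiveRoot_exp p (NeZero.ne p))

theorem etaQ_eq_quadraticChar (F : Type) [Field F] [Fintype F] (x : F) :
    etaQ F x = quadraticChar F x := by
  simp only [etaQ, quadraticChar_apply, quadraticCharFun]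
  split_ifs <;> simp

theorem etaBar_eq_quadraticChar (p : ℕ) [Fact p.Prime] (c : ZMod p) :
    etaBar p c = quadraticChar (ZMod p) c := by
  simp only [etaBar, quadraticChar_apply, quadraticCharFun]
  split_ifs <;> simp

theorem GaussQ_eq_quadraticGaussSum (p : ℕ) [NeZero p] (F : Type) [Field F] [Fintype F]
    [Algebra (ZMod p) F] :
    GaussQ p F = quadraticGaussSum (traceAddChar F (chiBarAddChar p)) := by
  rw [GaussQ, sum_filter_of_ne fun x _ hx => by rintro rfl; simp [etaQ] at hx]
  simp only [etaQ_eq_quadraticChar, chiQ, Trq, ← chiBarAddChar_apply, quadraticGaussSum, gaussSum,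
    MulChar.ringHomComp_apply, eq_intCast, traceAddChar_apply]

theorem GaussP_eq_quadraticGaussSum (p : ℕ) [Fact p.Prime] :
    GaussP p = quadraticGaussSum (chiBarAddChar p) := by
  rw [GaussP, sum_filter_of_ne fun y _ hy => by rintro rfl; simp [etaBar] at hy]
  simp only [etaBar_eq_quadraticChar, ← chiBarAddChar_apply, quadraticGaussSum, gaussSum,
    MulChar.ringHomComp_apply, eq_intCast]

theorem filter_Trq_eq_isotropicOrthogonal (p : ℕ) {F : Type} [Field F] [Fintype F]
    [Algebra (ZMod p) F] (a b : F) :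
    univ.filter (fun d : F => Trq p F (d ^ 2) = 0 ∧ Trq p F (a * d) = 0 ∧ Trq p F (b * d) = 0) =
      isotropicOrthogonal (ZMod p) a b :=
  filter_congr fun _ _ => Iff.rfl

theorem ringChar_zmod_ne_two_of_odd {p : ℕ} (hp : Odd p) : ringChar (ZMod p) ≠ 2 := by
  rw [ZMod.ringChar_zmod_n]
  rintro rfl
  exact absurd hp (by decide)

theorem finrank_zmod_eq_of_card_eq_pow {p m : ℕ} [Fact p.Prime] {F : Type*} [Field F] [Fintype F]
    [Algebra (ZMod p) F] (hq : Fintype.card F = p ^ m) : Module.finrank (ZMod p) F = m := by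
  have hcard := Module.card_eq_pow_finrank (K := ZMod p) (V := F)
  rw [ZMod.card, hq] at hcard
  exact (Nat.pow_right_injective (Fact.out : p.Prime).two_le hcard).symm

theorem linearIndependent_pair_of_forall_ne_algebraMap_mul {K L : Type*} [Field K] [Ring L]
    [Algebra K L] {a b : L} (ha : a ≠ 0) (hb : b ≠ 0)
    (hab : ∀ w : K, w ≠ 0 → a ≠ algebraMap K L w * b) : LinearIndependent K ![a, b] := by
  refine LinearIndependent.pair_symm_iff.1 ((LinearIndependent.pair_iff' hb).2 fun w hw => ?_)
  rw [Algebra.smul_def] at hw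
  refine hab w ?_ hw.symm
  rintro rfl
  exact ha (by rw [← hw, map_zero, zero_mul])

end PrimeField

theorem Omega_card_m_odd (p m : ℕ) [Fact (Nat.Prime p)] (hp : Odd p)
    (F : Type) [Field F] [Fintype F] [Algebra (ZMod p) F]
    (hm : 0 < m) (hq : Fintype.card F = p ^ m)
    (hmodd : Odd m) (a b : F) (ha : a ≠ 0) (hb : b ≠ 0)
    (hab : ∀ w : ZMod p, w ≠ 0 → a ≠ algebraMap (ZMod p) F w * b)
    (α β γ : ZMod p) (hα : α = Trq p F (a ^ 2)) (hβ : β = Trq p F (b ^ 2))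
    (hγ : γ = Trq p F (a * b)) :
    (α ≠ 0 ∧ β = 0 ∧ γ = 0 →
      (((univ.filter (fun d : F =>
      Trq p F (d ^ 2) = 0 ∧ Trq p F (a * d) = 0 ∧ Trq p F (b * d) = 0)).card : ℕ) : ℂ) = (p : ℂ) ^ ((m : ℤ) - 3 : ℤ) + etaBar p (-α) * (p : ℂ) ^ (-2 : ℤ) * ((p : ℂ) - 1) * (GaussQ p F * GaussP p)) ∧
    ((α ≠ 0 ∧ β ≠ 0 ∧ α * β ≠ γ ^ 2) ∨ (α = 0 ∧ β = 0) →
      (((univ.filter (fun d : F =>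
      Trq p F (d ^ 2) = 0 ∧ Trq p F (a * d) = 0 ∧ Trq p F (b * d) = 0)).card : ℕ) : ℂ) = (p : ℂ) ^ ((m : ℤ) - 3 : ℤ)) ∧
    (γ ≠ 0 ∧ ((α ≠ 0 ∧ β = 0) ∨ (α = 0 ∧ β ≠ 0)) →
      (((univ.filter (fun d : F =>
      Trq p F (d ^ 2) = 0 ∧ Trq p F (a * d) = 0 ∧ Trq p F (b * d) = 0)).card : ℕ) : ℂ) = (p : ℂ) ^ ((m : ℤ) - 3 : ℤ)) ∧
    ((α ≠ 0 ∧ β ≠ 0 ∧ α * β = γ ^ 2) ∨ (β ≠ 0 ∧ α = 0 ∧ γ = 0) →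
      (((univ.filter (fun d : F =>
      Trq p F (d ^ 2) = 0 ∧ Trq p F (a * d) = 0 ∧ Trq p F (b * d) = 0)).card : ℕ) : ℂ) = (p : ℂ) ^ ((m : ℤ) - 3 : ℤ) + etaBar p (-β) * (p : ℂ) ^ (-2 : ℤ) * ((p : ℂ) - 1) * (GaussQ p F * GaussP p)) := by
  have hfinrank : Module.finrank (ZMod p) F = m := finrank_zmod_eq_of_card_eq_pow hq
  simpa only [filter_Trq_eq_isotropicOrthogonal, etaBar_eq_quadraticChar,
    GaussQ_eq_quadraticGaussSum, GaussP_eq_quadraticGaussSum, ZMod.card, hfinrank] using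
    Omega_card_m_odd_general (ringChar_zmod_ne_two_of_odd hp) (hfinrank ▸ hmodd)
      (isPrimitive_chiBarAddChar p)
      (linearIndependent_pair_of_forall_ne_algebraMap_mul ha hb hab) hα hβ hγ
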